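/- arXiv:1312.7815 — 2 statements merged into one kernel-verified Lean document; each statement's English description precedes it below -/
import Mathlib

section
/- Let C, b, c be real numbers, let f(x) = (C/2)x² + bx + c, let u < v, let p be the affine function with p(u) = f(u) and p(v) = f(v), and let m be the minimum of ∫_u^v |f(x) − ℓ(x)| dx over all affine functions ℓ. Then ∫_u^v |f(x) − p(x)| dx = (8/3) · m; that is, the L1 error of the endpoint interpolant exceeds the best L1 affine approximation error by exactly the factor 8/3. -/
/-!
Let `a` be the midpoint and `h` the half-length of the interval, and let `A = C / 2`. The error of
the endpoint interpolant is `A ((x - a)² - h²)`. The function `A ((x - a)² - r²)` differs from `f`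
by an affine function for every `r`; at `r = h / 2` its sign is orthogonal to all affine functions,
being even about `a` with `∫ sign ((x - a)² - r²) = 2h - 4r`, and a function whose sign is
orthogonal to a subspace cannot be brought closer to zero in `L¹` by adding elements of that
subspace. Finally `∫ |(x - a)² - r²| = 2h³/3 - 2r²h + 8r³/3` is `4h³/3` at `r = h` and `h³/2` at
`r = h / 2`.
-/

open MeasureTheory Set SignType

section OrderedRing

variable {R : Type*} [Ring R] [LinearOrder R] [IsStrictOrderedRing R]

theorem abs_coe_sign_le_one (x : R) : |(sign x : R)| ≤ 1 := by
  cases sign x <;> simp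

theorem coe_sign_mul_le_abs (x y : R) : sign x * y ≤ |y| :=
  calc sign x * y ≤ |(sign x : R)| * |y| := (le_abs_self _).trans_eq (abs_mul _ _)
    _ ≤ |y| := mul_le_of_le_one_left (abs_nonneg y) (abs_coe_sign_le_one x)

end OrderedRing

theorem measurable_coe_sign : Measurable fun x : ℝ ↦ (sign x : ℝ) := by
  refine Monotone.measurable fun x y hxy ↦ ?_
  have cast_mono : Monotone fun s : SignType ↦ (s : ℝ) := by
    intro s t
    cases s <;> cases t <;> simp
  exact cast_mono (sign.monotone hxy)

theorem integral_abs_le_integral_abs_add_of_integral_sign_mul_eq_zero {X : Type*}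
    [MeasurableSpace X] {μ : Measure X} {g k : X → ℝ} (hg : Integrable g μ) (hk : Integrable k μ)
    (orthogonal : ∫ x, sign (g x) * k x ∂μ = 0) :
    ∫ x, |g x| ∂μ ≤ ∫ x, |g x + k x| ∂μ := by
  have integrable_sign_mul_k : Integrable (fun x ↦ sign (g x) * k x) μ :=
    hk.bdd_mul (measurable_coe_sign.comp_aemeasurable hg.aemeasurable).aestronglyMeasurable
      (.of_forall fun x ↦ abs_coe_sign_le_one (g x))
  calc ∫ x, |g x| ∂μ = ∫ x, (|g x| + sign (g x) * k x) ∂μ := by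
        rw [integral_add hg.abs integrable_sign_mul_k, orthogonal, add_zero]
    _ ≤ ∫ x, |g x + k x| ∂μ := by
        refine integral_mono (hg.abs.add integrable_sign_mul_k) (hg.add hk).abs fun x ↦ ?_
        simpa only [mul_add, sign_mul_self] using coe_sign_mul_le_abs (g x) (g x + k x)

theorem integral_sign_sq_sub_sq_mul {a r u v : ℝ} {g : ℝ → ℝ} (hr : 0 ≤ r) (hu : u ≤ a - r)
    (hv : a + r ≤ v) (hg : IntervalIntegrable g volume u v) :
    ∫ x in u..v, sign ((x - a) ^ 2 - r ^ 2) * g x =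
      (∫ x in u..a - r, g x) - (∫ x in a - r..a + r, g x) + ∫ x in a + r..v, g x := by
  have hm : a - r ≤ a + r := by linarith
  have left : EqOn g (fun x ↦ sign ((x - a) ^ 2 - r ^ 2) * g x) (uIoo u (a - r)) := by
    intro x hx
    rw [uIoo_of_le hu] at hx
    have : 0 < (x - a) ^ 2 - r ^ 2 := by nlinarith [hx.2]
    simp [sign_pos this]
  have middle : EqOn (fun x ↦ -g x) (fun x ↦ sign ((x - a) ^ 2 - r ^ 2) * g x)
      (uIoo (a - r) (a + r)) := by
    intro x hx
    rw [uIoo_of_le hm] at hx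
    have : (x - a) ^ 2 - r ^ 2 < 0 := by nlinarith [hx.1, hx.2]
    simp [sign_neg this]
  have right : EqOn g (fun x ↦ sign ((x - a) ^ 2 - r ^ 2) * g x) (uIoo (a + r) v) := by
    intro x hx
    rw [uIoo_of_le hv] at hx
    have : 0 < (x - a) ^ 2 - r ^ 2 := by nlinarith [hx.1]
    simp [sign_pos this]
  have restrict {s t : ℝ} (hs : u ≤ s) (hst : s ≤ t) (ht : t ≤ v) :
      IntervalIntegrable g volume s t := by
    refine hg.mono_set ?_
    rw [uIcc_of_le hst, uIcc_of_le (hs.trans (hst.trans ht))]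
    exact Icc_subset_Icc hs ht
  have integrable_left := (restrict le_rfl hu (hm.trans hv)).congr_uIoo left
  have integrable_middle := (restrict hu hm hv).neg.congr_uIoo middle
  have integrable_right := (restrict (hu.trans hm) hv le_rfl).congr_uIoo right
  rw [← intervalIntegral.integral_add_adjacent_intervals
      (integrable_left.trans integrable_middle) integrable_right,
    ← intervalIntegral.integral_add_adjacent_intervals integrable_left integrable_middle,
    ← intervalIntegral.integral_congr_uIoo left, ← intervalIntegral.integral_congr_uIoo middle,
    ← intervalIntegral.integral_congr_uIoo right, intervalIntegral.integral_neg, ← sub_eq_add_neg]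

theorem integral_sq_sub_sq (a r s t : ℝ) :
    ∫ x in s..t, ((x - a) ^ 2 - r ^ 2) = ((t - a) ^ 3 - (s - a) ^ 3) / 3 - r ^ 2 * (t - s) := by
  rw [intervalIntegral.integral_sub (Continuous.intervalIntegrable (by fun_prop) _ _)
    intervalIntegrable_const, intervalIntegral.integral_comp_sub_right (· ^ 2) a, integral_pow,
    intervalIntegral.integral_const, smul_eq_mul]
  ring

theorem integral_affine (γ δ s t : ℝ) :
    ∫ x in s..t, (γ * x + δ) = γ * ((t ^ 2 - s ^ 2) / 2) + δ * (t - s) := by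
  rw [intervalIntegral.integral_add (Continuous.intervalIntegrable (by fun_prop) _ _)
    intervalIntegrable_const, intervalIntegral.integral_const_mul, integral_id,
    intervalIntegral.integral_const, smul_eq_mul, mul_comm δ]

theorem integral_abs_sq_sub_sq (a : ℝ) {r h : ℝ} (hr : 0 ≤ r) (hrh : r ≤ h) :
    ∫ x in a - h..a + h, |(x - a) ^ 2 - r ^ 2| =
      2 / 3 * h ^ 3 - 2 * r ^ 2 * h + 8 / 3 * r ^ 3 := by
  simp_rw [← sign_mul_self]
  rw [integral_sign_sq_sub_sq_mul hr (by linarith) (by linarith)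
    (Continuous.intervalIntegrable (by fun_prop) _ _)]
  simp only [integral_sq_sub_sq]
  ring

theorem integral_sign_sq_sub_half_sq_mul_affine (a γ δ : ℝ) {h : ℝ} (hh : 0 ≤ h) :
    ∫ x in a - h..a + h, sign ((x - a) ^ 2 - (h / 2) ^ 2) * (γ * x + δ) = 0 := by
  rw [integral_sign_sq_sub_sq_mul (by linarith) (by linarith) (by linarith)
    (Continuous.intervalIntegrable (by fun_prop) _ _)]
  simp only [integral_affine]
  ring

theorem integral_abs_mul_sq_sub_half_sq_le (A a γ δ : ℝ) {h : ℝ} (hh : 0 ≤ h) :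
    ∫ x in a - h..a + h, |A * ((x - a) ^ 2 - (h / 2) ^ 2)| ≤
      ∫ x in a - h..a + h, |A * ((x - a) ^ 2 - (h / 2) ^ 2) + (γ * x + δ)| := by
  have hab : a - h ≤ a + h := by linarith
  have orthogonal :
      ∫ x in a - h..a + h, sign (A * ((x - a) ^ 2 - (h / 2) ^ 2)) * (γ * x + δ) = 0 := by
    simp only [sign_mul, coe_mul, mul_assoc, intervalIntegral.integral_const_mul,
      integral_sign_sq_sub_half_sq_mul_affine a γ δ hh, mul_zero]
  rw [intervalIntegral.integral_of_le hab] at orthogonal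
  rw [intervalIntegral.integral_of_le hab, intervalIntegral.integral_of_le hab]
  exact integral_abs_le_integral_abs_add_of_integral_sign_mul_eq_zero
    (Continuous.integrableOn_Ioc (by fun_prop)) (Continuous.integrableOn_Ioc (by fun_prop))
    orthogonal

theorem integral_abs_mul_sq_sub_sq (A a : ℝ) {r h : ℝ} (hr : 0 ≤ r) (hrh : r ≤ h) :
    ∫ x in a - h..a + h, |A * ((x - a) ^ 2 - r ^ 2)| =
      |A| * (2 / 3 * h ^ 3 - 2 * r ^ 2 * h + 8 / 3 * r ^ 3) := by
  simp only [abs_mul, intervalIntegral.integral_const_mul, integral_abs_sq_sub_sq a hr hrh]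

theorem isLeast_integral_abs_quadratic_sub_affine (A b c a : ℝ) {h : ℝ} (hh : 0 ≤ h) :
    IsLeast {e : ℝ | ∃ γ δ : ℝ,
      e = ∫ x in a - h..a + h, |A * x ^ 2 + b * x + c - (γ * x + δ)|} (|A| * (h ^ 3 / 2)) := by
  have norm_eq : ∫ x in a - h..a + h, |A * ((x - a) ^ 2 - (h / 2) ^ 2)| = |A| * (h ^ 3 / 2) := by
    rw [integral_abs_mul_sq_sub_sq A a (by linarith) (by linarith)]
    ring
  constructor
  · refine ⟨2 * A * a + b, c - A * (a ^ 2 - (h / 2) ^ 2), ?_⟩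
    rw [← norm_eq]
    congr! 3 with x
    ring
  · rintro _ ⟨γ, δ, rfl⟩
    rw [← norm_eq]
    convert integral_abs_mul_sq_sub_half_sq_le A a (2 * A * a + b - γ)
      (c - A * (a ^ 2 - (h / 2) ^ 2) - δ) hh using 4 with x
    ring

theorem quadratic_sub_affine_eq_of_eq_endpoints {R : Type*} [CommRing R] [IsDomain R]
    {A b c α β u v : R}
    (huv : u ≠ v) (hu : α * u + β = A * u ^ 2 + b * u + c)
    (hv : α * v + β = A * v ^ 2 + b * v + c) (x : R) :
    A * x ^ 2 + b * x + c - (α * x + β) = A * ((x - u) * (x - v)) := by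
  refine mul_left_cancel₀ (sub_ne_zero.2 huv) ?_
  linear_combination (x - u) * hv - (x - v) * hu

/-- For the quadratic `f(x) = (C/2)x² + bx + c` on `[u, v]`, the `L¹` error of the affine
interpolant `p` at the endpoints is exactly `8/3` times the best `L¹` affine approximation
error `m`. -/
theorem quadratic_interpolant_vs_best_L1 (C b c u v : ℝ) (huv : u < v) (f p : ℝ → ℝ)
    (hf : ∀ x, f x = C / 2 * x ^ 2 + b * x + c)
    (α β : ℝ) (hp : ∀ x, p x = α * x + β)
    (hpu : p u = f u) (hpv : p v = f v) (m : ℝ)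
    (hm : IsLeast {e : ℝ | ∃ γ δ : ℝ, e = ∫ x in u..v, |f x - (γ * x + δ)|} m) :
    (∫ x in u..v, |f x - p x|) = 8 / 3 * m := by
  obtain ⟨a, h, rfl, rfl⟩ : ∃ a h, u = a - h ∧ v = a + h :=
    ⟨(u + v) / 2, (v - u) / 2, by ring, by ring⟩
  have hh : 0 ≤ h := by linarith
  simp only [hf, hp] at hpu hpv hm ⊢
  have error_eq (x : ℝ) :
      C / 2 * x ^ 2 + b * x + c - (α * x + β) = C / 2 * ((x - a) ^ 2 - h ^ 2) := by
    rw [quadratic_sub_affine_eq_of_eq_endpoints huv.ne hpu hpv]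
    ring
  simp only [error_eq]
  rw [integral_abs_mul_sq_sub_sq _ _ hh le_rfl,
    hm.unique (isLeast_integral_abs_quadratic_sub_affine _ _ _ _ hh)]
  ring
end

section
/- (Jackson's uniqueness theorem for L1 approximation.) Let f be continuous on [a, b] with a < b, and let n ≥ 0. Then there is exactly one polynomial p* of degree at most n minimizing ∫_a^b |f(x) − p(x)| dx over all polynomials p of degree at most n; that is, the best L1 approximation to a continuous function out of the polynomials of degree ≤ n exists and is unique. -/
/-!
A convexity argument shows that the midpoint of two best approximations `g₁`, `g₂` is again best,
and that its error `e` vanishes only where both errors do, hence only at zeros of `g₁ - g₂`. If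
`g₁ ≠ g₂` are polynomials of degree at most `n`, then `e` has at most `n` zeros, so some nonzero
polynomial `q` of degree at most `n` has the sign of `e` throughout. Differentiating
`t ↦ ∫ |e - t q|` at its minimum `t = 0` gives `0 = ∫ sign(e) q = ∫ |q|`, which is absurd.
-/

open MeasureTheory Polynomial Filter Set

theorem exists_mem_forall_norm_sub_le {𝕜 E : Type*} [NontriviallyNormedField 𝕜]
    [LocallyCompactSpace 𝕜] [NormedAddCommGroup E] [NormedSpace 𝕜 E] (W : Submodule 𝕜 E)
    [FiniteDimensional 𝕜 W] (x : E) : ∃ w ∈ W, ∀ v ∈ W, ‖x - w‖ ≤ ‖x - v‖ := by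
  have : ProperSpace W := FiniteDimensional.proper 𝕜 W
  have coercive : Tendsto (fun w : W => ‖x - w‖) (cocompact W) atTop := by
    refine tendsto_atTop_mono (fun w => ?_)
      (tendsto_atTop_add_const_right _ (-‖x‖) (tendsto_norm_cocompact_atTop (E := W)))
    rw [← sub_eq_add_neg, norm_sub_rev]
    exact norm_sub_norm_le (w : E) x
  obtain ⟨w, hw⟩ := (show Continuous fun w : W => ‖x - w‖ by fun_prop).exists_forall_le coercive
  exact ⟨w, w.2, fun v hv => hw ⟨v, hv⟩⟩

section L1

variable {α : Type*} [MeasurableSpace α] {μ : Measure α} {V : Submodule ℝ (α → ℝ)}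
  {f g g₁ g₂ q : α → ℝ}

/-- `g` is a best approximation to `f` from `V` in `L¹(μ)`. As the integral of a non-integrable
function is `0`, this is meaningful only for integrable `f` and `V`. -/
def IsBestL1Approx (μ : Measure α) (V : Submodule ℝ (α → ℝ)) (f g : α → ℝ) : Prop :=
  g ∈ V ∧ ∀ h ∈ V, ∫ x, |f x - g x| ∂μ ≤ ∫ x, |f x - h x| ∂μ

/-- The map sending a function in a space of integrable functions to its class in `L¹(μ)`. -/
noncomputable def integrableToL1 (hV : ∀ g ∈ V, Integrable g μ) : V →ₗ[ℝ] α →₁[μ] ℝ where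
  toFun g := (hV g g.2).toL1 g
  map_add' g h := Integrable.toL1_add (g : α → ℝ) h (hV g g.2) (hV h h.2)
  map_smul' c g := Integrable.toL1_smul (g : α → ℝ) (hV g g.2) c

theorem norm_toL1_sub_integrableToL1 (hV : ∀ g ∈ V, Integrable g μ) (hf : Integrable f μ) (g : V) :
    ‖hf.toL1 f - integrableToL1 hV g‖ = ∫ x, |f x - (g : α → ℝ) x| ∂μ := by
  have hsub : hf.toL1 f - integrableToL1 hV g =
      (hf.sub (hV g g.2)).toL1 (f - (g : α → ℝ)) :=
    (Integrable.toL1_sub f (g : α → ℝ) hf (hV g g.2)).symm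
  rw [hsub]
  exact L1.norm_of_fun_eq_integral_norm (hf.sub (hV g g.2))

theorem exists_isBestL1Approx [FiniteDimensional ℝ V] (hV : ∀ g ∈ V, Integrable g μ)
    (hf : Integrable f μ) : ∃ g, IsBestL1Approx μ V f g := by
  obtain ⟨_, ⟨g, rfl⟩, hg⟩ :=
    exists_mem_forall_norm_sub_le (LinearMap.range (integrableToL1 hV)) (hf.toL1 f)
  refine ⟨g, g.2, fun h hh => ?_⟩
  simpa only [norm_toL1_sub_integrableToL1] using hg _ ⟨⟨h, hh⟩, rfl⟩

theorem hasDerivAt_integral_abs_sub_mul {e : α → ℝ} (he : Integrable e μ) (hq : Integrable q μ)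
    (hne : ∀ᵐ x ∂μ, e x ≠ 0) :
    HasDerivAt (fun t : ℝ => ∫ x, |e x - t * q x| ∂μ)
      (∫ x, (SignType.sign (e x) : ℝ) * -q x ∂μ) 0 := by
  have sign_measurable : Measurable fun y : ℝ => (SignType.sign y : ℝ) :=
    Monotone.measurable fun y z hyz => by
      have h := SignType.sign.monotone hyz
      revert h
      cases SignType.sign y <;> cases SignType.sign z <;> simp
  have lipschitz (x : α) :
      LipschitzOnWith (Real.nnabs (q x)) (fun t : ℝ => |e x - t * q x|) univ :=
    LipschitzOnWith.of_dist_le_mul fun s _ t _ => by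
      rw [Real.dist_eq, Real.dist_eq, Real.coe_nnabs, ← abs_mul]
      refine (abs_abs_sub_abs_le _ _).trans_eq ?_
      rw [abs_sub_comm]
      ring_nf
  have deriv (x : α) (hx : e x ≠ 0) : HasDerivAt (fun t : ℝ => |e x - t * q x|)
      ((SignType.sign (e x) : ℝ) * -q x) 0 := by
    have inner : HasDerivAt (fun t : ℝ => e x - t * q x) (-q x) 0 := by
      simpa using ((hasDerivAt_id (0 : ℝ)).mul_const (q x)).const_sub (e x)
    exact HasDerivAt.comp (h₂ := fun y : ℝ => |y|) 0 (by simpa using hasDerivAt_abs hx) inner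
  refine (hasDerivAt_integral_of_dominated_loc_of_lip univ_mem
    (Eventually.of_forall fun t => (he.sub (hq.const_mul t)).abs.aestronglyMeasurable)
    (by simpa using he.abs) ?_ (Eventually.of_forall lipschitz) hq (hne.mono deriv)).2
  exact (sign_measurable.comp_aemeasurable he.aemeasurable).aestronglyMeasurable.mul
    hq.neg.aestronglyMeasurable

theorem ae_norm_add_eq_of_le_integral {E : Type*} [NormedAddCommGroup E] {u v : α → E}
    (hu : Integrable u μ) (hv : Integrable v μ)
    (h : ∫ x, ‖u x‖ ∂μ + ∫ x, ‖v x‖ ∂μ ≤ ∫ x, ‖u x + v x‖ ∂μ) :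
    ∀ᵐ x ∂μ, ‖u x + v x‖ = ‖u x‖ + ‖v x‖ := by
  have norm_add_le_ae : (fun x => ‖u x + v x‖) ≤ᵐ[μ] fun x => ‖u x‖ + ‖v x‖ :=
    Eventually.of_forall fun x => norm_add_le _ _
  have integrable_add := (hu.add hv).norm
  have integrable_norm_add := hu.norm.add hv.norm
  refine (integral_eq_iff_of_ae_le integrable_add integrable_norm_add norm_add_le_ae).1 ?_
  refine (integral_mono_ae integrable_add integrable_norm_add norm_add_le_ae).antisymm ?_
  exact (integral_add hu.norm hv.norm).trans_le h

theorem two_mul_abs_sub_midpoint (a b c : ℝ) :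
    2 * |a - midpoint ℝ b c| = |(a - b) + (a - c)| := by
  rw [← abs_two, ← abs_mul, midpoint_eq_smul_add, smul_eq_mul, invOf_eq_inv]
  ring_nf

theorem two_mul_integral_abs_sub_midpoint (f g₁ g₂ : α → ℝ) :
    2 * ∫ x, |f x - midpoint ℝ g₁ g₂ x| ∂μ = ∫ x, |(f x - g₁ x) + (f x - g₂ x)| ∂μ := by
  rw [← integral_const_mul]
  simp only [pi_midpoint_apply, two_mul_abs_sub_midpoint]

namespace IsBestL1Approx

theorem integral_sign_mul_eq_zero (hg : IsBestL1Approx μ V f g)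
    (he : Integrable (fun x => f x - g x) μ) (hq : Integrable q μ) (hqV : q ∈ V)
    (hne : ∀ᵐ x ∂μ, f x - g x ≠ 0) : ∫ x, (SignType.sign (f x - g x) : ℝ) * q x ∂μ = 0 := by
  have isMin : IsLocalMin (fun t : ℝ => ∫ x, |f x - g x - t * q x| ∂μ) 0 :=
    Eventually.of_forall fun t => by
      simpa [sub_sub] using hg.2 (g + t • q) (V.add_mem hg.1 (V.smul_mem t hqV))
  simpa [integral_neg] using isMin.hasDerivAt_eq_zero (hasDerivAt_integral_abs_sub_mul he hq hne)

theorem ae_eq_zero_of_mul_nonneg (hg : IsBestL1Approx μ V f g)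
    (he : Integrable (fun x => f x - g x) μ) (hq : Integrable q μ) (hqV : q ∈ V)
    (hne : ∀ᵐ x ∂μ, f x - g x ≠ 0) (hsign : ∀ᵐ x ∂μ, 0 ≤ q x * (f x - g x)) : q =ᵐ[μ] 0 := by
  have sign_mul_eq_abs : ∀ᵐ x ∂μ, (SignType.sign (f x - g x) : ℝ) * q x = |q x| := by
    filter_upwards [hne, hsign] with x hx hqx
    rcases hx.lt_or_gt with h | h
    · rw [sign_neg h, abs_of_nonpos (nonpos_of_mul_nonneg_left hqx h)]
      simp
    · rw [sign_pos h, abs_of_nonneg (nonneg_of_mul_nonneg_left hqx h)]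
      simp
  have integral_abs : ∫ x, |q x| ∂μ = 0 := by
    rw [← integral_congr_ae sign_mul_eq_abs, hg.integral_sign_mul_eq_zero he hq hqV hne]
  filter_upwards [(integral_eq_zero_iff_of_nonneg (fun x => abs_nonneg (q x)) hq.abs).1
    integral_abs] with x hx
  exact abs_eq_zero.1 hx

protected theorem midpoint (h₁ : IsBestL1Approx μ V f g₁) (h₂ : IsBestL1Approx μ V f g₂)
    (he₁ : Integrable (fun x => f x - g₁ x) μ) (he₂ : Integrable (fun x => f x - g₂ x) μ) :
    IsBestL1Approx μ V f (midpoint ℝ g₁ g₂) := by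
  refine ⟨V.convex.midpoint_mem h₁.1 h₂.1, fun h hh => ?_⟩
  have triangle : ∫ x, |(f x - g₁ x) + (f x - g₂ x)| ∂μ ≤
      ∫ x, |f x - g₁ x| ∂μ + ∫ x, |f x - g₂ x| ∂μ := by
    rw [← integral_add he₁.abs he₂.abs]
    exact integral_mono (he₁.add he₂).abs (he₁.abs.add he₂.abs) fun x => abs_add_le _ _
  rw [← two_mul_integral_abs_sub_midpoint] at triangle
  linarith [h₁.2 h hh, h₂.2 h hh]

theorem ae_abs_add_eq (h₁ : IsBestL1Approx μ V f g₁) (h₂ : IsBestL1Approx μ V f g₂)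
    (he₁ : Integrable (fun x => f x - g₁ x) μ) (he₂ : Integrable (fun x => f x - g₂ x) μ) :
    ∀ᵐ x ∂μ, |(f x - g₁ x) + (f x - g₂ x)| = |f x - g₁ x| + |f x - g₂ x| := by
  refine ae_norm_add_eq_of_le_integral he₁ he₂ ?_
  have hm : midpoint ℝ g₁ g₂ ∈ V := V.convex.midpoint_mem h₁.1 h₂.1
  have := two_mul_integral_abs_sub_midpoint (μ := μ) f g₁ g₂
  simp only [Real.norm_eq_abs]
  linarith [h₁.2 _ hm, h₂.2 _ hm]

end IsBestL1Approx
end L1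

section PropertyA

variable {X : Type*} [TopologicalSpace X] {V : Submodule ℝ (X → ℝ)} {K : Set X}

/-- A form of Strauss's property A for a space `V` of functions on `K`: a continuous function whose
zeros are all zeros of a given nontrivial member of `V` agrees in sign with some nontrivial member
of `V`. Functions are compared on `K` only, since their values elsewhere are irrelevant. -/
def HasPropertyA (V : Submodule ℝ (X → ℝ)) (K : Set X) : Prop :=
  ∀ h ∈ V, ¬ EqOn h 0 K → ∀ e : X → ℝ, ContinuousOn e K → (∀ x ∈ K, e x = 0 → h x = 0) →
    ∃ q ∈ V, ¬ EqOn q 0 K ∧ ∀ x ∈ K, 0 ≤ q x * e x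

variable [T2Space X] [MeasurableSpace X] [BorelSpace X] {μ : Measure X} [μ.IsOpenPosMeasure]
  [IsFiniteMeasureOnCompacts μ] {f g₁ g₂ : X → ℝ}

namespace IsBestL1Approx

theorem eq_of_sub_midpoint_eq_zero (hK : IsCompact K) (hKint : K ⊆ closure (interior K))
    (h₁ : IsBestL1Approx (μ.restrict K) V f g₁) (h₂ : IsBestL1Approx (μ.restrict K) V f g₂)
    (he₁ : ContinuousOn (fun x => f x - g₁ x) K) (he₂ : ContinuousOn (fun x => f x - g₂ x) K)
    {x : X} (hx : x ∈ K) (hzero : f x - midpoint ℝ g₁ g₂ x = 0) : g₁ x = g₂ x := by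
  have abs_add_eq := Measure.eqOn_of_ae_eq
    (h₁.ae_abs_add_eq h₂ (he₁.integrableOn_compact hK) (he₂.integrableOn_compact hK))
    (he₁.add he₂).abs (he₁.abs.add he₂.abs) hKint hx
  rw [pi_midpoint_apply] at hzero
  simp only [← two_mul_abs_sub_midpoint, hzero, abs_zero, mul_zero] at abs_add_eq
  have hx₁ : f x - g₁ x = 0 := abs_nonpos_iff.1 (by linarith [abs_nonneg (f x - g₂ x)])
  have hx₂ : f x - g₂ x = 0 := abs_nonpos_iff.1 (by linarith [abs_nonneg (f x - g₁ x)])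
  linarith

theorem eqOn_of_hasPropertyA (hK : IsCompact K) (hKint : K ⊆ closure (interior K))
    (hf : ContinuousOn f K) (hV : ∀ g ∈ V, ContinuousOn g K) (hA : HasPropertyA V K)
    (hnull : ∀ h ∈ V, ¬ EqOn h 0 K → ∀ᵐ x ∂μ.restrict K, h x ≠ 0)
    (h₁ : IsBestL1Approx (μ.restrict K) V f g₁) (h₂ : IsBestL1Approx (μ.restrict K) V f g₂) :
    EqOn g₁ g₂ K := by
  by_contra hne
  have error_continuousOn : ∀ g ∈ V, ContinuousOn (fun x => f x - g x) K :=
    fun g hg => hf.sub (hV g hg)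
  have he₁ := error_continuousOn g₁ h₁.1
  have he₂ := error_continuousOn g₂ h₂.1
  set m : X → ℝ := midpoint ℝ g₁ g₂
  have hm : IsBestL1Approx (μ.restrict K) V f m :=
    h₁.midpoint h₂ (he₁.integrableOn_compact hK) (he₂.integrableOn_compact hK)
  have hem := error_continuousOn m hm.1
  have error_zero : ∀ x ∈ K, f x - m x = 0 → (g₁ - g₂) x = 0 := fun x hx hzero =>
    sub_eq_zero.2 (eq_of_sub_midpoint_eq_zero hK hKint h₁ h₂ he₁ he₂ hx hzero)
  have sub_mem : g₁ - g₂ ∈ V := V.sub_mem h₁.1 h₂.1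
  have sub_ne : ¬ EqOn (g₁ - g₂) 0 K := fun h => hne fun x hx => sub_eq_zero.1 (h hx)
  obtain ⟨q, hq, hq_ne, hq_sign⟩ := hA (g₁ - g₂) sub_mem sub_ne _ hem error_zero
  have error_ne : ∀ᵐ x ∂μ.restrict K, f x - m x ≠ 0 := by
    filter_upwards [hnull _ sub_mem sub_ne, ae_restrict_mem hK.measurableSet] with x hx hxK
    exact mt (error_zero x hxK) hx
  have q_ae_zero : q =ᵐ[μ.restrict K] 0 :=
    hm.ae_eq_zero_of_mul_nonneg (hem.integrableOn_compact hK)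
      ((hV q hq).integrableOn_compact hK) hq error_ne
      (ae_restrict_of_forall_mem hK.measurableSet hq_sign)
  exact hq_ne (Measure.eqOn_of_ae_eq q_ae_zero (hV q hq) continuousOn_const hKint)

end IsBestL1Approx
end PropertyA

section SignPattern

theorem exists_subset_prod_sub_mul_nonneg {S : Set ℝ} (hS : S.OrdConnected) {e : ℝ → ℝ}
    (he : ContinuousOn e S) (Z : Finset ℝ) (hZ : ∀ x ∈ S, x ∈ Z ↔ e x = 0) :
    ∃ T ⊆ Z, ∃ c : ℝ, c ≠ 0 ∧ ∀ x ∈ S, 0 ≤ (∏ z ∈ T, (x - z)) * (c * e x) := by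
  induction Z using Finset.induction_on_max generalizing S with
  | empty =>
    refine ⟨∅, Finset.Subset.rfl, ?_⟩
    have he_ne : ∀ x ∈ S, e x ≠ 0 := fun x hx h => by simpa using (hZ x hx).2 h
    rcases hS.isPreconnected.mapsTo_Ioi_or_Iio he he_ne with hpos | hneg
    · exact ⟨1, one_ne_zero, fun x hx => by simpa using (hpos hx).le⟩
    · exact ⟨-1, by simp, fun x hx => by simpa using (hneg hx).le⟩
  | insert z Z hz ih =>
    obtain ⟨T, hTZ, c, hc, hleft⟩ := ih (hS.inter ordConnected_Iio) (he.mono inter_subset_left)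
      fun x hx => by rw [← hZ x hx.1, Finset.mem_insert, or_iff_right (ne_of_lt hx.2)]
    have he_z (hzS : z ∈ S) : e z = 0 := (hZ z hzS).1 (Finset.mem_insert_self z Z)
    have prod_nonneg (x : ℝ) (hx : z < x) : 0 ≤ ∏ t ∈ T, (x - t) :=
      Finset.prod_nonneg fun t ht => sub_nonneg.2 ((hz t (hTZ ht)).trans hx).le
    have ne_zero_right : ∀ x ∈ S ∩ Ioi z, c * e x ≠ 0 := by
      rintro x ⟨hxS, hzx⟩
      refine mul_ne_zero hc fun h => ?_
      rcases Finset.mem_insert.1 ((hZ x hxS).2 h) with rfl | hxZ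
      · exact lt_irrefl x hzx
      · exact lt_asymm hzx (hz x hxZ)
    rcases (hS.inter ordConnected_Ioi).isPreconnected.mapsTo_Ioi_or_Iio
      (continuousOn_const.mul (he.mono inter_subset_left)) ne_zero_right with hpos | hneg
    · refine ⟨T, hTZ.trans (Finset.subset_insert z Z), c, hc, fun x hx => ?_⟩
      rcases lt_trichotomy x z with hxz | rfl | hzx
      · exact hleft x ⟨hx, hxz⟩
      · simp [he_z hx]
      · exact mul_nonneg (prod_nonneg x hzx) (hpos ⟨hx, hzx⟩).le
    · have hzT : z ∉ T := fun h => lt_irrefl z (hz z (hTZ h))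
      refine ⟨insert z T, Finset.insert_subset_insert z hTZ, -c, neg_ne_zero.2 hc, fun x hx => ?_⟩
      rw [Finset.prod_insert hzT, neg_mul, mul_neg, mul_assoc, ← neg_mul, neg_sub]
      rcases lt_trichotomy x z with hxz | rfl | hzx
      · exact mul_nonneg (sub_nonneg.2 hxz.le) (hleft x ⟨hx, hxz⟩)
      · simp
      · exact mul_nonneg_of_nonpos_of_nonpos (sub_nonpos.2 hzx.le)
          (mul_nonpos_of_nonneg_of_nonpos (prod_nonneg x hzx) (hneg ⟨hx, hzx⟩).le)

theorem exists_polynomial_eval_mul_nonneg {S : Set ℝ} (hS : S.OrdConnected) {e : ℝ → ℝ}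
    (he : ContinuousOn e S) (Z : Finset ℝ) (hZ : ∀ x ∈ S, e x = 0 → x ∈ Z) :
    ∃ q : ℝ[X], q ≠ 0 ∧ q.natDegree ≤ Z.card ∧ ∀ x ∈ S, 0 ≤ q.eval x * e x := by
  classical
  obtain ⟨T, hTZ, c, hc, hT⟩ := exists_subset_prod_sub_mul_nonneg hS he {z ∈ Z | e z = 0}
    fun x hx => by simpa using hZ x hx
  refine ⟨C c * ∏ z ∈ T, (X - C z), ?_, ?_, fun x hx => ?_⟩
  · exact mul_ne_zero (C_ne_zero.2 hc) (Finset.prod_ne_zero_iff.2 fun z _ => X_sub_C_ne_zero z)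
  · rw [natDegree_C_mul hc, natDegree_finsetProd_X_sub_C_eq_card]
    exact Finset.card_le_card (hTZ.trans (Finset.filter_subset _ _))
  · have heval : (C c * ∏ z ∈ T, (X - C z)).eval x * e x = (∏ z ∈ T, (x - z)) * (c * e x) := by
      simp only [eval_mul, eval_C, eval_prod, eval_sub, eval_X]
      ring
    exact heval ▸ hT x hx

end SignPattern

section PolynomialFunctions

variable {n : ℕ}

/-- The functions `ℝ → ℝ` given by polynomials of degree at most `n`. -/
noncomputable def polynomialFunctionsLE (n : ℕ) : Submodule ℝ (ℝ → ℝ) :=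
  (degreeLE ℝ n).map (LinearMap.pi leval)

theorem mem_polynomialFunctionsLE {g : ℝ → ℝ} :
    g ∈ polynomialFunctionsLE n ↔ ∃ p : ℝ[X], p.degree ≤ n ∧ (fun x => p.eval x) = g := by
  simp only [polynomialFunctionsLE, Submodule.mem_map, mem_degreeLE]
  rfl

theorem eval_mem_polynomialFunctionsLE {p : ℝ[X]} :
    (fun x => p.eval x) ∈ polynomialFunctionsLE n ↔ p.degree ≤ n := by
  rw [mem_polynomialFunctionsLE]
  refine ⟨?_, fun hp => ⟨p, hp, rfl⟩⟩
  rintro ⟨q, hq, hqp⟩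
  rwa [← Polynomial.funext (congr_fun hqp)]

instance finiteDimensional_polynomialFunctionsLE :
    FiniteDimensional ℝ (polynomialFunctionsLE n) := by
  classical
  have : FiniteDimensional ℝ (degreeLE ℝ n) := by
    rw [degreeLE_eq_span_X_pow]
    infer_instance
  unfold polynomialFunctionsLE
  infer_instance

theorem continuous_of_mem_polynomialFunctionsLE {g : ℝ → ℝ} (hg : g ∈ polynomialFunctionsLE n) :
    Continuous g := by
  obtain ⟨p, -, rfl⟩ := mem_polynomialFunctionsLE.1 hg
  exact p.continuous

theorem isBestL1Approx_polynomialFunctionsLE_iff {μ : Measure ℝ} {f : ℝ → ℝ} {p : ℝ[X]} :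
    IsBestL1Approx μ (polynomialFunctionsLE n) f (fun x => p.eval x) ↔
      p.degree ≤ n ∧ ∀ q : ℝ[X], q.degree ≤ n →
        ∫ x, |f x - p.eval x| ∂μ ≤ ∫ x, |f x - q.eval x| ∂μ := by
  rw [IsBestL1Approx, eval_mem_polynomialFunctionsLE]
  simp only [mem_polynomialFunctionsLE, forall_exists_index, and_imp, forall_apply_eq_imp_iff₂]

theorem polynomialFunctionsLE_ae_ne_zero {μ : Measure ℝ} [NullSingletonClass μ] {h : ℝ → ℝ}
    (hh : h ∈ polynomialFunctionsLE n) (hne : h ≠ 0) : ∀ᵐ x ∂μ, h x ≠ 0 := by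
  obtain ⟨p, -, rfl⟩ := mem_polynomialFunctionsLE.1 hh
  have hp : p ≠ 0 := by
    rintro rfl
    exact hne (by ext; simp)
  exact measure_eq_zero_iff_ae_notMem.1 ((finite_setOfPred_isRoot hp).measure_zero μ)

theorem hasPropertyA_polynomialFunctionsLE {S : Set ℝ} (hS : S.OrdConnected) (hinf : S.Infinite) :
    HasPropertyA (polynomialFunctionsLE n) S := by
  intro h hh hne e he hzero
  obtain ⟨p, hp, rfl⟩ := mem_polynomialFunctionsLE.1 hh
  have hp0 : p ≠ 0 := by
    rintro rfl
    exact hne fun x _ => eval_zero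
  obtain ⟨q, hq0, hq_deg, hq_sign⟩ := exists_polynomial_eval_mul_nonneg hS he p.roots.toFinset
    fun x hx hex => by simpa [hp0] using hzero x hx hex
  have card_roots_le : p.roots.toFinset.card ≤ n :=
    (Multiset.toFinset_card_le _).trans
      ((card_roots' p).trans (natDegree_le_iff_degree_le.2 hp))
  refine ⟨fun x => q.eval x, eval_mem_polynomialFunctionsLE.2
    (natDegree_le_iff_degree_le.1 (hq_deg.trans card_roots_le)), fun hq_zero => hq0 ?_, hq_sign⟩
  exact eq_zero_of_infinite_isRoot q (hinf.mono hq_zero)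

end PolynomialFunctions

theorem jackson_L1_best_approximation_unique_general (μ : Measure ℝ) [IsLocallyFiniteMeasure μ]
    [NullSingletonClass μ] [μ.IsOpenPosMeasure] (a b : ℝ) (hab : a < b) (n : ℕ) (f : ℝ → ℝ)
    (hf : ContinuousOn f (Icc a b)) :
    ∃! p : ℝ[X], p.degree ≤ n ∧ ∀ q : ℝ[X], q.degree ≤ n →
      ∫ x in Icc a b, |f x - p.eval x| ∂μ ≤ ∫ x in Icc a b, |f x - q.eval x| ∂μ := by
  have continuousOn : ∀ g ∈ polynomialFunctionsLE n, ContinuousOn g (Icc a b) :=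
    fun g hg => (continuous_of_mem_polynomialFunctionsLE hg).continuousOn
  obtain ⟨g, hg⟩ := exists_isBestL1Approx (μ := μ.restrict (Icc a b))
    (fun g hg => (continuousOn g hg).integrableOn_Icc) hf.integrableOn_Icc
  obtain ⟨p, -, rfl⟩ := mem_polynomialFunctionsLE.1 hg.1
  simp only [← isBestL1Approx_polynomialFunctionsLE_iff]
  refine ⟨p, hg, fun q hq => ?_⟩
  have eqOn : EqOn (fun x => q.eval x) (fun x => p.eval x) (Icc a b) :=
    hq.eqOn_of_hasPropertyA isCompact_Icc (closure_interior_Icc hab.ne).ge hf continuousOn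
      (hasPropertyA_polynomialFunctionsLE ordConnected_Icc (Icc_infinite hab))
      (fun h hh hne => polynomialFunctionsLE_ae_ne_zero hh fun h0 => hne fun x _ => congr_fun h0 x)
      hg
  exact eq_of_infinite_eval_eq q p ((Icc_infinite hab).mono eqOn)

/-- **Jackson's uniqueness theorem for `L¹` approximation.** For `f` continuous on `[a, b]`
and `n ≥ 0`, there is exactly one polynomial of degree at most `n` minimizing
`∫_a^b |f - p|` over all polynomials `p` of degree at most `n`. -/
theorem jackson_L1_best_approximation_unique (a b : ℝ) (hab : a < b) (n : ℕ) (f : ℝ → ℝ)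
    (hf : ContinuousOn f (Set.Icc a b)) :
    ∃! p : Polynomial ℝ, p.degree ≤ (n : ℕ) ∧
      ∀ q : Polynomial ℝ, q.degree ≤ (n : ℕ) →
        (∫ x in a..b, |f x - p.eval x|) ≤ ∫ x in a..b, |f x - q.eval x| := by
  simpa only [intervalIntegral.integral_of_le hab.le, ← integral_Icc_eq_integral_Ioc] using
    jackson_L1_best_approximation_unique_general volume a b hab n f hf
end
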